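/- Let μ be a probability measure on ℝⁿ with density e^{−U} where U : ℝⁿ → ℝ ∪ {+∞} is ρ-convex for some ρ > 0. For a bounded continuous function F : ℝⁿ → ℝ and s > 0, let R_s F(x) = inf_{y ∈ ℝⁿ} { F(x+y) + |y|²/(2s) } be the infimum convolution. Then for every t ∈ (0,1), ( ∫_{ℝⁿ} e^{R_{t/ρ} F} dμ )^{1−t} ≤ ∫_{ℝⁿ} e^{(1−t) F} dμ. -/

import Mathlib

open MeasureTheory Real Set
open scoped ENNReal BigOperators

/-!
The inequality is an instance of the Prékopa–Leindler inequality with weights `1 - t` and `t`,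
applied to `f = e^{Q - U}`, `g = e^{-U}` and `h = e^{(1-t)F - U}`, where `Q = R_{t/ρ} F`. For
`z = (1-t)x + ty` one has `z - x = t(y - x)`, so the definition of `Q` gives
`Q x ≤ F z + (ρt/2)|y - x|²`, while `ρ`-convexity gives
`U z ≤ (1-t) U x + t U y - (ρ/2) t (1-t) |y - x|²` (`weight_ineq`). After multiplying the first
estimate by `1 - t` the quadratic terms cancel, which is `f(x)^{1-t} g(y)^t ≤ h(z)`; and
`∫ g = 1`.

Neither `S` nor `U` is assumed measurable. Since the frontier of a convex set is Lebesgue-null and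
a convex function is continuous on the interior of its domain, the density agrees almost everywhere
with the measurable function `e^{-U}` restricted to the interior of `S`.

Prékopa–Leindler (`prekopa_leindler`) is proved for measurable `ℝ≥0∞`-valued functions. On the
line it follows from the one-dimensional Brunn–Minkowski inequality applied to the superlevel sets
of `f` and `g`, both normalized to have supremum `1`, the layer-cake formula on levels in `(0,1)`
and the weighted arithmetic-geometric mean inequality; unbounded functions are reached by
truncation and monotone convergence. The case of `ℝⁿ` follows by induction, since by Tonelli the
marginals in the first coordinate again satisfy the one-dimensional hypothesis.
-/

/-- One-dimensional Brunn–Minkowski for compact sets: `K + L` contains the translates `K + min L`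
and `L + max K`, which meet only at `max K + min L`. -/
lemma volume_add_le_of_isCompact {K L C : Set ℝ} (hK : IsCompact K) (hL : IsCompact L)
    (hK0 : K.Nonempty) (hL0 : L.Nonempty) (h : ∀ x ∈ K, ∀ y ∈ L, x + y ∈ C) :
    volume K + volume L ≤ volume C := by
  obtain ⟨M, hMK, hM⟩ := hK.exists_isGreatest hK0
  obtain ⟨m, hmL, hm⟩ := hL.exists_isLeast hL0
  have h1 : volume ((fun x => x + (-m)) ⁻¹' K) = volume K := measure_preimage_add_right _ _ _
  have h2 : volume ((fun x => x + (-M)) ⁻¹' L) = volume L := measure_preimage_add_right _ _ _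
  rw [← h1, ← h2, ← measure_union₀]
  · apply measure_mono
    rintro z (hz | hz)
    · simpa using h _ hz m hmL
    · simpa using h M hMK _ hz
  · exact (hL.measurableSet.preimage (by fun_prop)).nullMeasurableSet
  · apply measure_mono_null (t := {M + m}) _ (by simp)
    rintro z ⟨hz, hz'⟩
    have := hM hz
    have := hm hz'
    simp only [mem_singleton_iff]
    linarith

open scoped Pointwise in
/-- One-dimensional Brunn–Minkowski, weighted, with the sumset `aA + bB` replaced by any set `C`
containing it; `C` need not be measurable. -/
lemma brunn_minkowski_real {A B C : Set ℝ} (hA : MeasurableSet A) (hB : MeasurableSet B)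
    (hA0 : A.Nonempty) (hB0 : B.Nonempty) {a b : ℝ} (ha : 0 ≤ a) (hb : 0 ≤ b)
    (h : ∀ x ∈ A, ∀ y ∈ B, a * x + b * y ∈ C) :
    ENNReal.ofReal a * volume A + ENNReal.ofReal b * volume B ≤ volume C := by
  obtain ⟨x₀, hx₀⟩ := hA0
  obtain ⟨y₀, hy₀⟩ := hB0
  -- Inner regularity supplies possibly empty compact sets; inserting `x₀` and `y₀` makes them
  -- nonempty without lowering their measure.
  have key : ∀ K, K ⊆ A ∧ IsCompact K → ∀ L, L ⊆ B ∧ IsCompact L →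
      ENNReal.ofReal a * volume K + ENNReal.ofReal b * volume L ≤ volume C := by
    rintro K ⟨hKA, hK⟩ L ⟨hLB, hL⟩
    have h1 : ENNReal.ofReal a * volume (insert x₀ K) = volume (a • insert x₀ K) := by
      rw [Measure.addHaar_smul]; simp [abs_of_nonneg ha]
    have h2 : ENNReal.ofReal b * volume (insert y₀ L) = volume (b • insert y₀ L) := by
      rw [Measure.addHaar_smul]; simp [abs_of_nonneg hb]
    calc _ ≤ ENNReal.ofReal a * volume (insert x₀ K) + ENNReal.ofReal b * volume (insert y₀ L) := by
          gcongr <;> exact subset_insert _ _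
      _ ≤ _ := by
        rw [h1, h2]
        refine volume_add_le_of_isCompact ((hK.insert x₀).smul a) ((hL.insert y₀).smul b)
          (insert_nonempty _ _).smul_set (insert_nonempty _ _).smul_set ?_
        rintro _ ⟨x, hx, rfl⟩ _ ⟨y, hy, rfl⟩
        exact h x (insert_subset hx₀ hKA hx) y (insert_subset hy₀ hLB hy)
  rw [hA.measure_eq_iSup_isCompact, hB.measure_eq_iSup_isCompact]
  simp only [ENNReal.mul_iSup, iSup_and']
  exact ENNReal.biSup_add_biSup_le' ⟨∅, by simp⟩ ⟨∅, by simp⟩ key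

/-- Layer-cake formula for the truncation at height `1`: only levels in `(0,1)` contribute. -/
lemma lintegral_min_one_eq {φ : ℝ → ℝ≥0∞} (hφ : Measurable φ) :
    ∫⁻ x, min (φ x) 1 = ∫⁻ s in Ioo (0 : ℝ) 1, volume {x | ENNReal.ofReal s < φ x} := by
  have hfin : ∀ x, min (φ x) 1 ≠ ∞ := fun x => ne_top_of_le_ne_top ENNReal.one_ne_top (min_le_right _ _)
  have h1 := lintegral_eq_lintegral_meas_lt (f := fun x => (min (φ x) 1).toReal) volume
    (Filter.Eventually.of_forall fun x => ENNReal.toReal_nonneg)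
    (hφ.min measurable_const).ennreal_toReal.aemeasurable
  simp only [ENNReal.ofReal_toReal (hfin _)] at h1
  rw [h1]
  have hset : ∀ s : ℝ, 0 < s → {x | s < (min (φ x) 1).toReal}
      = {x | ENNReal.ofReal s < φ x ∧ s < 1} := by
    intro s hs
    ext x
    simp only [mem_ofPred_eq]
    rw [← ENNReal.ofReal_lt_iff_lt_toReal hs.le (hfin x), lt_min_iff, ENNReal.ofReal_lt_one]
  rw [← Ioi_inter_Iio, inter_comm, ← setLIntegral_indicator measurableSet_Iio]
  refine setLIntegral_congr_fun measurableSet_Ioi fun s hs => ?_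
  simp only [hset s hs, indicator, mem_Iio]
  split_ifs with h <;> simp [h]

/-- Weighted arithmetic-geometric mean inequality in `ℝ≥0∞`, i.e. Young's inequality with exponents
`1/a` and `1/b`. -/
lemma geom_le_arith {a b : ℝ} (ha : 0 < a) (hb : 0 < b) (hab : a + b = 1) (X Y : ℝ≥0∞) :
    X ^ a * Y ^ b ≤ ENNReal.ofReal a * X + ENNReal.ofReal b * Y := by
  have hpq : (a⁻¹).HolderConjugate b⁻¹ := by
    rw [Real.holderConjugate_iff]
    exact ⟨(one_lt_inv₀ ha).2 (by linarith), by simpa using hab⟩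
  have := ENNReal.young_inequality (X ^ a) (Y ^ b) hpq
  rw [← ENNReal.rpow_mul, ← ENNReal.rpow_mul, mul_inv_cancel₀ ha.ne', mul_inv_cancel₀ hb.ne',
    ENNReal.ofReal_inv_of_pos ha, ENNReal.ofReal_inv_of_pos hb, ENNReal.rpow_one,
    ENNReal.rpow_one, div_eq_mul_inv, div_eq_mul_inv, inv_inv, inv_inv] at this
  simpa [mul_comm] using this

/-- Prékopa–Leindler on the line under the normalization `sup f = sup g = 1`. Then for `0 < s < 1`
the superlevel sets `{f > s}` and `{g > s}` are nonempty, and their weighted sum lies in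
`{h > s}`. -/
lemma pl_real_of_iSup_eq_one {a b : ℝ} (ha : 0 < a) (hb : 0 < b) (hab : a + b = 1)
    {f g h : ℝ → ℝ≥0∞} (hf : Measurable f) (hg : Measurable g) (hh : Measurable h)
    (hf1 : ⨆ x, f x = 1) (hg1 : ⨆ x, g x = 1)
    (hfgh : ∀ x y, f x ^ a * g y ^ b ≤ h (a * x + b * y)) :
    (∫⁻ x, f x) ^ a * (∫⁻ x, g x) ^ b ≤ ∫⁻ x, h x := by
  have ef : ∫⁻ x, f x = ∫⁻ x, min (f x) 1 :=
    lintegral_congr fun x => (min_eq_left (hf1 ▸ le_iSup f x)).symm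
  have eg : ∫⁻ x, g x = ∫⁻ x, min (g x) 1 :=
    lintegral_congr fun x => (min_eq_left (hg1 ▸ le_iSup g x)).symm
  refine (geom_le_arith ha hb hab _ _).trans ?_
  rw [ef, eg, lintegral_min_one_eq hf, lintegral_min_one_eq hg]
  refine le_trans ?_ (lintegral_mono (f := fun x => min (h x) 1) fun x => min_le_left _ _)
  rw [lintegral_min_one_eq hh, ← lintegral_const_mul' _ _ ENNReal.ofReal_ne_top,
    ← lintegral_const_mul' _ _ ENNReal.ofReal_ne_top]
  refine (le_lintegral_add _ _).trans ?_
  refine setLIntegral_mono' measurableSet_Ioo fun s hs => ?_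
  have hs1 : ENNReal.ofReal s < 1 := ENNReal.ofReal_lt_one.2 hs.2
  obtain ⟨x₀, hx₀⟩ := lt_iSup_iff.1 (hf1 ▸ hs1)
  obtain ⟨y₀, hy₀⟩ := lt_iSup_iff.1 (hg1 ▸ hs1)
  refine brunn_minkowski_real (measurableSet_lt measurable_const hf)
    (measurableSet_lt measurable_const hg) ⟨x₀, hx₀⟩ ⟨y₀, hy₀⟩
    ha.le hb.le fun x hx y hy => ?_
  refine lt_of_lt_of_le ?_ (hfgh x y)
  calc ENNReal.ofReal s = ENNReal.ofReal s ^ a * ENNReal.ofReal s ^ b := by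
        rw [← ENNReal.rpow_add_of_nonneg _ _ ha.le hb.le, hab, ENNReal.rpow_one]
    _ < _ := ENNReal.mul_lt_mul (ENNReal.rpow_lt_rpow hx ha) (ENNReal.rpow_lt_rpow hy hb)

/-- Prékopa–Leindler on the line for bounded `f` and `g`, by rescaling to suprema `1`. -/
lemma pl_real_of_iSup_ne_top {a b : ℝ} (ha : 0 < a) (hb : 0 < b) (hab : a + b = 1)
    {f g h : ℝ → ℝ≥0∞} (hf : Measurable f) (hg : Measurable g) (hh : Measurable h)
    (hf1 : ⨆ x, f x ≠ ∞) (hg1 : ⨆ x, g x ≠ ∞)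
    (hfgh : ∀ x y, f x ^ a * g y ^ b ≤ h (a * x + b * y)) :
    (∫⁻ x, f x) ^ a * (∫⁻ x, g x) ^ b ≤ ∫⁻ x, h x := by
  set α := ⨆ x, f x with hα
  set β := ⨆ x, g x with hβ
  rcases eq_or_ne α 0 with h0 | hα0
  · have : ∀ x, f x = 0 := by simpa [hα] using h0
    simp [this, ENNReal.zero_rpow_of_pos ha]
  rcases eq_or_ne β 0 with h0 | hβ0
  · have : ∀ x, g x = 0 := by simpa [hβ] using h0
    simp [this, ENNReal.zero_rpow_of_pos hb]
  have hc0 : α ^ a * β ^ b ≠ 0 := mul_ne_zero (by simp [hα0, hf1]) (by simp [hβ0, hg1])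
  have hct : α ^ a * β ^ b ≠ ∞ := ENNReal.mul_ne_top
    (ENNReal.rpow_ne_top_of_nonneg ha.le hf1) (ENNReal.rpow_ne_top_of_nonneg hb.le hg1)
  have hpow : ∀ X Y : ℝ≥0∞, (α⁻¹ * X) ^ a * (β⁻¹ * Y) ^ b = (α ^ a * β ^ b)⁻¹ * (X ^ a * Y ^ b) := by
    intro X Y
    rw [ENNReal.mul_rpow_of_nonneg _ _ ha.le, ENNReal.mul_rpow_of_nonneg _ _ hb.le,
      ENNReal.inv_rpow, ENNReal.inv_rpow, ENNReal.mul_inv (Or.inr (ENNReal.rpow_ne_top_of_nonneg hb.le hg1))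
      (Or.inl (ENNReal.rpow_ne_top_of_nonneg ha.le hf1))]
    ring
  have := pl_real_of_iSup_eq_one ha hb hab (f := fun x => α⁻¹ * f x) (g := fun x => β⁻¹ * g x)
    (h := fun x => (α ^ a * β ^ b)⁻¹ * h x) (hf.const_mul _) (hg.const_mul _) (hh.const_mul _)
    (by rw [← ENNReal.mul_iSup, ← hα, ENNReal.inv_mul_cancel hα0 hf1])
    (by rw [← ENNReal.mul_iSup, ← hβ, ENNReal.inv_mul_cancel hβ0 hg1])
    (fun x y => by rw [hpow]; gcongr; exact hfgh x y)
  rw [lintegral_const_mul _ hf, lintegral_const_mul _ hg, lintegral_const_mul _ hh, hpow] at this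
  exact (ENNReal.mul_le_mul_iff_right (ENNReal.inv_ne_zero.2 hct) (ENNReal.inv_ne_top.2 hc0)).1 this

/-- Prékopa–Leindler inequality on the line. -/
lemma pl_real {a b : ℝ} (ha : 0 < a) (hb : 0 < b) (hab : a + b = 1)
    {f g h : ℝ → ℝ≥0∞} (hf : Measurable f) (hg : Measurable g) (hh : Measurable h)
    (hfgh : ∀ x y, f x ^ a * g y ^ b ≤ h (a * x + b * y)) :
    (∫⁻ x, f x) ^ a * (∫⁻ x, g x) ^ b ≤ ∫⁻ x, h x := by
  -- The vanishing cases are split off because multiplication on `ℝ≥0∞` is discontinuous at `(0, ∞)`.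
  rcases eq_or_ne (∫⁻ x, f x) 0 with h0 | hf0
  · simp [h0, ENNReal.zero_rpow_of_pos ha]
  rcases eq_or_ne (∫⁻ x, g x) 0 with h0 | hg0
  · simp [h0, ENNReal.zero_rpow_of_pos hb]
  have lim : ∀ φ : ℝ → ℝ≥0∞, Measurable φ → Filter.Tendsto (fun N : ℕ => ∫⁻ x, min (φ x) N)
      Filter.atTop (nhds (∫⁻ x, φ x)) := by
    intro φ hφ
    refine lintegral_tendsto_of_tendsto_of_monotone (fun N => (hφ.min measurable_const).aemeasurable)
      (.of_forall fun x m n hmn => ?_) (.of_forall fun x => ?_)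
    · dsimp only; gcongr
    · simpa using (tendsto_const_nhds (x := φ x)).min ENNReal.tendsto_nat_nhds_top
  have bdd : ∀ (φ : ℝ → ℝ≥0∞) (N : ℕ), ⨆ x, min (φ x) N ≠ ∞ := fun φ N =>
    ne_top_of_le_ne_top (ENNReal.natCast_ne_top N) (iSup_le fun x => min_le_right _ _)
  have hT := ENNReal.Tendsto.mul
    ((ENNReal.continuous_rpow_const (y := a)).tendsto _ |>.comp (lim f hf)) (Or.inl (by simp [hf0, ha, ha.not_gt]))
    ((ENNReal.continuous_rpow_const (y := b)).tendsto _ |>.comp (lim g hg)) (Or.inl (by simp [hg0, hb, hb.not_gt]))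
  refine le_of_tendsto' hT fun N => ?_
  refine pl_real_of_iSup_ne_top ha hb hab (hf.min measurable_const) (hg.min measurable_const) hh
    (bdd f N) (bdd g N) fun x y => le_trans ?_ (hfgh x y)
  gcongr <;> exact min_le_left _ _

lemma lintegral_fin_succ {n : ℕ} {f : (Fin (n + 1) → ℝ) → ℝ≥0∞} (hf : Measurable f) :
    ∫⁻ x, f x = ∫⁻ r : ℝ, ∫⁻ v : Fin n → ℝ, f (Fin.cons r v) := by
  have e := (volume_preserving_piFinSuccAbove (fun _ : Fin (n + 1) => ℝ) 0).symm
  rw [← e.lintegral_comp hf, Measure.volume_eq_prod]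
  refine (lintegral_prod _ (hf.comp e.measurable).aemeasurable).trans ?_
  simp [MeasurableEquiv.piFinSuccAbove, Fin.consEquiv]

lemma measurable_cons {n : ℕ} :
    Measurable fun p : ℝ × (Fin n → ℝ) => (Fin.cons p.1 p.2 : Fin (n + 1) → ℝ) := by
  simpa [MeasurableEquiv.piFinSuccAbove] using! (MeasurableEquiv.piFinSuccAbove (fun _ : Fin (n + 1) => ℝ) 0).symm.measurable

/-- Prékopa–Leindler inequality on `Fin n → ℝ`, by induction on `n`: the inductive hypothesis on
slices shows that the marginals satisfy the hypothesis of `pl_real`. -/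
lemma pl_pi {a b : ℝ} (ha : 0 < a) (hb : 0 < b) (hab : a + b = 1) (n : ℕ)
    {f g h : (Fin n → ℝ) → ℝ≥0∞} (hf : Measurable f) (hg : Measurable g) (hh : Measurable h)
    (hfgh : ∀ x y, f x ^ a * g y ^ b ≤ h (a • x + b • y)) :
    (∫⁻ x, f x) ^ a * (∫⁻ x, g x) ^ b ≤ ∫⁻ x, h x := by
  induction n with
  | zero =>
    have h1 : volume (univ : Set (Fin 0 → ℝ)) = 1 := by
      rw [Measure.volume_pi_eq_dirac]; simp
    simp only [lintegral_unique, h1, mul_one]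
    exact (hfgh _ _).trans_eq (congrArg h (Subsingleton.elim _ _))
  | succ n ih =>
    rw [lintegral_fin_succ hf, lintegral_fin_succ hg, lintegral_fin_succ hh]
    refine pl_real ha hb hab (hf.comp measurable_cons).lintegral_prod_right'
      (hg.comp measurable_cons).lintegral_prod_right'
      (hh.comp measurable_cons).lintegral_prod_right' fun r s => ?_
    refine ih (hf.comp (measurable_cons.comp measurable_prodMk_left))
      (hg.comp (measurable_cons.comp measurable_prodMk_left))
      (hh.comp (measurable_cons.comp measurable_prodMk_left)) fun v w => ?_
    refine (hfgh (Fin.cons r v) (Fin.cons s w)).trans_eq (congrArg h ?_)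
    ext i
    refine Fin.cases ?_ (fun j => ?_) i <;> simp

/-- **Prékopa–Leindler inequality** on Euclidean space. -/
theorem prekopa_leindler {a b : ℝ} (ha : 0 < a) (hb : 0 < b) (hab : a + b = 1) (n : ℕ)
    {f g h : EuclideanSpace ℝ (Fin n) → ℝ≥0∞} (hf : Measurable f) (hg : Measurable g)
    (hh : Measurable h) (hfgh : ∀ x y, f x ^ a * g y ^ b ≤ h (a • x + b • y)) :
    (∫⁻ x, f x) ^ a * (∫⁻ x, g x) ^ b ≤ ∫⁻ x, h x := by
  have e := PiLp.volume_preserving_toLp (Fin n)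
  rw [← e.lintegral_comp hf, ← e.lintegral_comp hg, ← e.lintegral_comp hh]
  exact pl_pi ha hb hab n (hf.comp e.measurable) (hg.comp e.measurable) (hh.comp e.measurable)
    fun x y => hfgh _ _

/-- Quantitative convexity inequality for a `ρ`-convex function `U`, obtained from the identity
`|(1-t)x + ty|² = (1-t)|x|² + t|y|² - t(1-t)|y-x|²`. -/
lemma weight_ineq {n : ℕ} {ρ : ℝ} {S : Set (EuclideanSpace ℝ (Fin n))}
    {U : EuclideanSpace ℝ (Fin n) → ℝ}
    (hU : ConvexOn ℝ S (fun x => U x - ρ / 2 * ‖x‖ ^ 2)) {t : ℝ} (ht : t ∈ Ioo (0 : ℝ) 1)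
    {x y : EuclideanSpace ℝ (Fin n)} (hx : x ∈ S) (hy : y ∈ S) :
    U ((1 - t) • x + t • y)
      ≤ (1 - t) * U x + t * U y - ρ / 2 * (t * (1 - t)) * ‖y - x‖ ^ 2 := by
  have h := hU.2 hx hy (sub_nonneg.2 ht.2.le) ht.1.le (by ring)
  simp only [smul_eq_mul] at h
  have h1 : ‖(1 - t) • x + t • y‖ ^ 2
      = (1 - t) * ‖x‖ ^ 2 + t * ‖y‖ ^ 2 - t * (1 - t) * ‖y - x‖ ^ 2 := by
    rw [norm_add_sq_real, norm_sub_sq_real, norm_smul, norm_smul, inner_smul_left,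
      inner_smul_right, mul_pow, mul_pow, Real.norm_eq_abs, Real.norm_eq_abs, sq_abs, sq_abs,
      real_inner_comm x y]
    simp
    ring
  rw [h1] at h
  linarith

/-- **Bobkov–Ledoux inequality via Prékopa–Leindler**: let `μ` be the probability
measure on `ℝⁿ` with density `e^{-U}` where `U : ℝⁿ → ℝ ∪ {+∞}` is `ρ`-convex
(modelled by a real-valued `U` on a convex domain `S`, `+∞` outside). For a bounded
continuous `F : ℝⁿ → ℝ` and `s > 0`, let `R_s F(x) = inf_y { F(x+y) + |y|²/(2s) }` be
the infimum convolution. Then for every `t ∈ (0,1)`,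
`(∫ e^{R_{t/ρ} F} dμ)^{1-t} ≤ ∫ e^{(1-t)F} dμ`. -/
theorem bobkov_ledoux_inf_convolution
    {n : ℕ} (ρ : ℝ) (hρ : 0 < ρ)
    (S : Set (EuclideanSpace ℝ (Fin n))) (hS : Convex ℝ S)
    (U : EuclideanSpace ℝ (Fin n) → ℝ)
    (hU : ConvexOn ℝ S (fun x => U x - ρ / 2 * ‖x‖ ^ 2))
    (μ : Measure (EuclideanSpace ℝ (Fin n)))
    (hμ : μ = volume.withDensity fun x =>
      ENNReal.ofReal (S.indicator (fun y => Real.exp (-U y)) x))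
    (hprob : IsProbabilityMeasure μ)
    (F : EuclideanSpace ℝ (Fin n) → ℝ)
    (hFcont : Continuous F) (hFbdd : ∃ M : ℝ, ∀ x, |F x| ≤ M)
    (R : ℝ → (EuclideanSpace ℝ (Fin n) → ℝ) → EuclideanSpace ℝ (Fin n) → ℝ)
    (hR : ∀ s G x, R s G x = ⨅ y : EuclideanSpace ℝ (Fin n), (G (x + y) + ‖y‖ ^ 2 / (2 * s)))
    (t : ℝ) (ht : t ∈ Set.Ioo (0 : ℝ) 1) :
    (∫ x, Real.exp (R (t / ρ) F x) ∂μ) ^ (1 - t)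
      ≤ ∫ x, Real.exp ((1 - t) * F x) ∂μ := by
  obtain ⟨M, hM⟩ := hFbdd
  have ht0 := ht.1
  have ht1 : 0 < 1 - t := sub_pos.2 ht.2
  set Q := R (t / ρ) F with hQdef
  have hbdd : ∀ x, BddBelow (range fun y : EuclideanSpace ℝ (Fin n) =>
      F (x + y) + ‖y‖ ^ 2 / (2 * (t / ρ))) := by
    refine fun x => ⟨-M, ?_⟩
    rintro _ ⟨y, rfl⟩
    have h1 := (abs_le.1 (hM (x + y))).1
    have h2 : 0 ≤ ‖y‖ ^ 2 / (2 * (t / ρ)) := by positivity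
    dsimp only
    linarith
  have hQle : ∀ x y, Q x ≤ F (x + y) + ‖y‖ ^ 2 / (2 * (t / ρ)) := by
    intro x y
    rw [hQdef, hR]
    exact ciInf_le (hbdd x) y
  have hQmeas : Measurable Q := by
    have : Q = fun x => ⨅ y : EuclideanSpace ℝ (Fin n), (F (x + y) + ‖y‖ ^ 2 / (2 * (t / ρ))) :=
      funext fun x => hR _ _ _
    rw [this]
    exact (upperSemicontinuous_ciInf hbdd fun y =>
      Continuous.upperSemicontinuous (by fun_prop)).measurable
  -- A measurable representative of the density of `μ`.
  set d : EuclideanSpace ℝ (Fin n) → ℝ≥0∞ :=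
    (interior S).indicator fun x => ENNReal.ofReal (Real.exp (-U x)) with hd
  have hUc : ContinuousOn U (interior S) := by
    have h1 : ContinuousOn (fun x : EuclideanSpace ℝ (Fin n) => ρ / 2 * ‖x‖ ^ 2) (interior S) := by
      fun_prop
    exact (hU.continuousOn_interior.add h1).congr fun x _ => by simp
  have hdmeas : Measurable d := by
    have : Measurable ((interior S).indicator fun x => Real.exp (-U x)) := by
      classical
      rw [← piecewise_eq_indicator]
      exact hUc.neg.rexp.measurable_piecewise continuousOn_const isOpen_interior.measurableSet
    convert this.ennreal_ofReal with x
    simp only [hd, indicator]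
    split_ifs <;> simp
  have hμd : μ = volume.withDensity d := by
    rw [hμ]
    refine withDensity_congr_ae ?_
    filter_upwards [measure_eq_zero_iff_ae_notMem.1 (hS.addHaar_frontier volume)] with x hx
    by_cases hxS : x ∈ S
    · have : x ∈ interior S := by
        by_contra h
        exact hx ⟨subset_closure hxS, h⟩
      simp [hd, hxS, this]
    · have : x ∉ interior S := fun h => hxS (interior_subset h)
      simp [hd, hxS, this]
  have hlin : ∀ G : EuclideanSpace ℝ (Fin n) → ℝ, Measurable G →
      ∫ x, Real.exp (G x) ∂μ = (∫⁻ x, d x * ENNReal.ofReal (Real.exp (G x))).toReal := by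
    intro G hG
    rw [integral_eq_lintegral_of_nonneg_ae (.of_forall fun x => (Real.exp_pos _).le)
      hG.exp.aestronglyMeasurable, hμd,
      lintegral_withDensity_eq_lintegral_mul _ hdmeas hG.exp.ennreal_ofReal]
    rfl
  have hd1 : ∫⁻ x, d x = 1 := by
    have := hprob.measure_univ
    rwa [hμd, withDensity_apply _ MeasurableSet.univ, Measure.restrict_univ] at this
  have hFmeas : Measurable fun x => (1 - t) * F x := hFcont.measurable.const_mul _
  rw [hlin Q hQmeas, hlin _ hFmeas, ENNReal.toReal_rpow]
  refine ENNReal.toReal_mono ?_ ?_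
  -- The integral on the right is finite because `F` is bounded, so `toReal` is monotone here.
  · refine ne_top_of_le_ne_top (b := ∫⁻ x, d x * ENNReal.ofReal (Real.exp ((1 - t) * M))) ?_ ?_
    · rw [lintegral_mul_const _ hdmeas, hd1]
      simp
    · gcongr with x
      exact (abs_le.1 (hM x)).2
  · have hPL := prekopa_leindler ht1 ht0 (by ring) n
      (f := fun x => d x * ENNReal.ofReal (Real.exp (Q x))) (g := d)
      (h := fun x => d x * ENNReal.ofReal (Real.exp ((1 - t) * F x)))
      (hdmeas.mul hQmeas.exp.ennreal_ofReal) hdmeas (hdmeas.mul hFmeas.exp.ennreal_ofReal) ?_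
    · simpa [hd1] using hPL
    intro x y
    by_cases hx : x ∈ interior S
    swap
    · simp [hd, hx, ht1]
    by_cases hy : y ∈ interior S
    swap
    · simp [hd, hy, ht0]
    have hz : (1 - t) • x + t • y ∈ interior S := hS.interior hx hy ht1.le ht0.le (by ring)
    simp only [hd, indicator_of_mem hx, indicator_of_mem hy, indicator_of_mem hz]
    have hexp : ∀ u v : ℝ, ENNReal.ofReal (Real.exp u) * ENNReal.ofReal (Real.exp v)
        = ENNReal.ofReal (Real.exp (u + v)) := fun u v => by
      rw [Real.exp_add, ENNReal.ofReal_mul (Real.exp_pos _).le]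
    have hexp' : ∀ u v : ℝ, ENNReal.ofReal (Real.exp u) ^ v
        = ENNReal.ofReal (Real.exp (u * v)) := fun u v => by
      rw [ENNReal.ofReal_rpow_of_pos (Real.exp_pos _), ← Real.exp_mul]
    rw [hexp, hexp, hexp', hexp', hexp]
    refine ENNReal.ofReal_le_ofReal (Real.exp_le_exp.2 ?_)
    have h1 := weight_ineq hU ht (interior_subset hx) (interior_subset hy)
    -- The shift `t • (y - x)` leads from `x` to the convex combination of `x` and `y`.
    have h2 := hQle x (t • (y - x))
    rw [show x + t • (y - x) = (1 - t) • x + t • y by module, norm_smul, mul_pow,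
      Real.norm_eq_abs, sq_abs,
      show t ^ 2 * ‖y - x‖ ^ 2 / (2 * (t / ρ)) = ρ / 2 * t * ‖y - x‖ ^ 2 by field_simp] at h2
    have h3 := mul_le_mul_of_nonneg_left h2 ht1.le
    linarith
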